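/- If two 0-chains γx and γy satisfy: (i) (x,y) = γx + γy as 0-chains; (ii) for every σ ∈ G_x, the 0-chain σ·γx − γx cancels decoupled fractions; and (iii) for every σ ∈ G_y, the 0-chain σ·γy − γy cancels decoupled fractions, then (γx, γy) is a pseudo-decoupling of (x,y). -/

import Mathlib

open IntermediateField
open scoped BigOperators Classical

set_option synthInstance.maxHeartbeats 1000000
set_option maxHeartbeats 1600000

noncomputable section

namespace QuadrantWalk

variable {K : Type} [Field K] [Algebra ℂ K]

/-- Evaluation of the step (Laurent) polynomial `S(X,Y) = ∑ w_{i,j} X^i Y^j`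
    at a pair of elements of a field. -/
def stepEval (St : Finset (ℤ × ℤ)) (w : ℤ × ℤ → ℂ) (u v : K) : K :=
  ∑ p ∈ St, algebraMap ℂ K (w p) * u ^ p.1 * v ^ p.2

/-- The step polynomial involves both `X` and `Y`. -/
def NotUnivariate (St : Finset (ℤ × ℤ)) : Prop :=
  (∃ p ∈ St, ∃ q ∈ St, p.1 ≠ q.1) ∧ ∃ p ∈ St, ∃ q ∈ St, p.2 ≠ q.2

/-- The kernel polynomial `K̃(X,Y,t) = X^mx * Y^my * (1 - t·S(X,Y))` as an element of
`ℂ[X,Y,t]`, with variables `0 ↦ X`, `1 ↦ Y`, `2 ↦ t`. -/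
def kernelPoly (St : Finset (ℤ × ℤ)) (w : ℤ × ℤ → ℂ) (mx my : ℕ) :
    MvPolynomial (Fin 3) ℂ :=
  MvPolynomial.X 0 ^ mx * MvPolynomial.X 1 ^ my -
    MvPolynomial.X 2 *
      ∑ p ∈ St, MvPolynomial.C (w p) *
        MvPolynomial.X 0 ^ (p.1 + (mx : ℤ)).toNat *
        MvPolynomial.X 1 ^ (p.2 + (my : ℤ)).toNat

/-- `-mx` (resp. `-my`) is the smallest `X`-exponent (resp. `Y`-exponent) of the model. -/
structure ExponentBounds (St : Finset (ℤ × ℤ)) (mx my : ℕ) : Prop where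
  lowerX : ∀ p ∈ St, -(mx : ℤ) ≤ p.1
  lowerY : ∀ p ∈ St, -(my : ℤ) ≤ p.2
  attainX : ∃ p ∈ St, p.1 = -(mx : ℤ)
  attainY : ∃ p ∈ St, p.2 = -(my : ℤ)

/-- `x`-adjacency : equal first coordinates and equal values of `S`. -/
def XAdj (St : Finset (ℤ × ℤ)) (w : ℤ × ℤ → ℂ) (a b : K × K) : Prop :=
  a.1 = b.1 ∧ stepEval St w a.1 a.2 = stepEval St w b.1 b.2

/-- `y`-adjacency : equal second coordinates and equal values of `S`. -/
def YAdj (St : Finset (ℤ × ℤ)) (w : ℤ × ℤ → ℂ) (a b : K × K) : Prop :=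
  a.2 = b.2 ∧ stepEval St w a.1 a.2 = stepEval St w b.1 b.2

/-- Adjacency. -/
def Adj (St : Finset (ℤ × ℤ)) (w : ℤ × ℤ → ℂ) (a b : K × K) : Prop :=
  XAdj St w a b ∨ YAdj St w a b

/-- The orbit of the walk: the equivalence class of `(x,y)` under the
reflexive-transitive closure of adjacency. -/
def orbit (St : Finset (ℤ × ℤ)) (w : ℤ × ℤ → ℂ) (x y : K) : Set (K × K) :=
  {a | Relation.ReflTransGen (Adj St w) (x, y) a}

/-- `k = ℂ(S(x,y))`. -/
def kF (St : Finset (ℤ × ℤ)) (w : ℤ × ℤ → ℂ) (x y : K) : IntermediateField ℂ K :=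
  adjoin ℂ {stepEval St w x y}

/-- `k(x) = ℂ(x, S(x,y))`. -/
def kxF (St : Finset (ℤ × ℤ)) (w : ℤ × ℤ → ℂ) (x y : K) : IntermediateField ℂ K :=
  adjoin ℂ {x, stepEval St w x y}

/-- `k(y) = ℂ(y, S(x,y))`. -/
def kyF (St : Finset (ℤ × ℤ)) (w : ℤ × ℤ → ℂ) (x y : K) : IntermediateField ℂ K :=
  adjoin ℂ {y, stepEval St w x y}

/-- `k(x,y) = ℂ(x,y)`. -/
def kxyF (x y : K) : IntermediateField ℂ K := adjoin ℂ {x, y}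

/-- `k(𝒪)`: the subfield generated over `k` by all coordinates of the orbit. -/
def orbitF (St : Finset (ℤ × ℤ)) (w : ℤ × ℤ → ℂ) (x y : K) : IntermediateField ℂ K :=
  adjoin ℂ ({stepEval St w x y} ∪ {z | ∃ a ∈ orbit St w x y, z = a.1 ∨ z = a.2})

/-- The standing hypotheses: nonzero weights, a non-univariate step polynomial,
`x, y` algebraically independent over `ℂ`, and `𝕂` an algebraic closure of `ℂ(x,y)`. -/
structure Setting (St : Finset (ℤ × ℤ)) (w : ℤ × ℤ → ℂ) (x y : K) : Prop where
  weight_ne : ∀ p ∈ St, w p ≠ 0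
  notUniv : NotUnivariate St
  indep : AlgebraicIndependent ℂ ![x, y]
  algClosed : IsAlgClosed K
  algebraic : Algebra.IsAlgebraic (kxyF x y) K

lemma self_mem_orbit (St : Finset (ℤ × ℤ)) (w : ℤ × ℤ → ℂ) (x y : K) :
    (x, y) ∈ orbit St w x y := Relation.ReflTransGen.refl

lemma x_mem_orbitF (St : Finset (ℤ × ℤ)) (w : ℤ × ℤ → ℂ) (x y : K) :
    x ∈ orbitF St w x y := by
  apply subset_adjoin
  exact Set.mem_union_right _ ⟨(x, y), self_mem_orbit St w x y, Or.inl rfl⟩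

lemma y_mem_orbitF (St : Finset (ℤ × ℤ)) (w : ℤ × ℤ → ℂ) (x y : K) :
    y ∈ orbitF St w x y := by
  apply subset_adjoin
  exact Set.mem_union_right _ ⟨(x, y), self_mem_orbit St w x y, Or.inr rfl⟩

lemma S_mem_orbitF (St : Finset (ℤ × ℤ)) (w : ℤ × ℤ → ℂ) (x y : K) :
    stepEval St w x y ∈ orbitF St w x y := by
  apply subset_adjoin
  exact Set.mem_union_left _ rfl

lemma x_mem_kxF (St : Finset (ℤ × ℤ)) (w : ℤ × ℤ → ℂ) (x y : K) :
    x ∈ kxF St w x y :=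
  subset_adjoin ℂ _ (Set.mem_insert _ _)

lemma S_mem_kxF (St : Finset (ℤ × ℤ)) (w : ℤ × ℤ → ℂ) (x y : K) :
    stepEval St w x y ∈ kxF St w x y :=
  subset_adjoin ℂ _ (Set.mem_insert_of_mem _ rfl)

lemma y_mem_kyF (St : Finset (ℤ × ℤ)) (w : ℤ × ℤ → ℂ) (x y : K) :
    y ∈ kyF St w x y :=
  subset_adjoin ℂ _ (Set.mem_insert _ _)

lemma S_mem_kyF (St : Finset (ℤ × ℤ)) (w : ℤ × ℤ → ℂ) (x y : K) :
    stepEval St w x y ∈ kyF St w x y :=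
  subset_adjoin ℂ _ (Set.mem_insert_of_mem _ rfl)

/-- The subgroup of `ℂ`-automorphisms of `M` fixing the subfield `E` pointwise. -/
def fixingAuts (E M : IntermediateField ℂ K) : Subgroup (↥M ≃ₐ[ℂ] ↥M) where
  carrier := {σ | ∀ (z : K) (_ : z ∈ E) (hzM : z ∈ M), σ ⟨z, hzM⟩ = ⟨z, hzM⟩}
  one_mem' := fun _ _ _ => rfl
  mul_mem' := by
    intro σ τ hσ hτ z hzE hzM
    show σ (τ ⟨z, hzM⟩) = ⟨z, hzM⟩
    rw [hτ z hzE hzM, hσ z hzE hzM]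
  inv_mem' := by
    intro σ hσ z hzE hzM
    show σ.symm ⟨z, hzM⟩ = ⟨z, hzM⟩
    conv_lhs => rw [← hσ z hzE hzM]
    exact σ.symm_apply_apply _

/-- The Galois group `G_x = Gal(k(𝒪)|k(x))`. -/
def Gx (St : Finset (ℤ × ℤ)) (w : ℤ × ℤ → ℂ) (x y : K) :
    Subgroup (↥(orbitF St w x y) ≃ₐ[ℂ] ↥(orbitF St w x y)) :=
  fixingAuts (kxF St w x y) (orbitF St w x y)

/-- The Galois group `G_y = Gal(k(𝒪)|k(y))`. -/
def Gy (St : Finset (ℤ × ℤ)) (w : ℤ × ℤ → ℂ) (x y : K) :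
    Subgroup (↥(orbitF St w x y) ≃ₐ[ℂ] ↥(orbitF St w x y)) :=
  fixingAuts (kyF St w x y) (orbitF St w x y)

/-- The Galois group `G_{xy} = Gal(k(𝒪)|k(x,y))`. -/
def Gxy (St : Finset (ℤ × ℤ)) (w : ℤ × ℤ → ℂ) (x y : K) :
    Subgroup (↥(orbitF St w x y) ≃ₐ[ℂ] ↥(orbitF St w x y)) :=
  fixingAuts (kxyF x y) (orbitF St w x y)

/-- Extend an automorphism of an intermediate field to a map on all of `K`
(by the identity outside). -/
def extendAut {M : IntermediateField ℂ K} (σ : ↥M ≃ₐ[ℂ] ↥M) (z : K) : K :=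
  if h : z ∈ M then (σ ⟨z, h⟩ : K) else z

/-- The coordinate-wise action of an automorphism on a `0`-chain. -/
def actChain {M : IntermediateField ℂ K} (σ : ↥M ≃ₐ[ℂ] ↥M)
    (γ : (K × K) →₀ ℂ) : (K × K) →₀ ℂ :=
  Finsupp.mapDomain (Prod.map (extendAut σ) (extendAut σ)) γ

/-- Evaluation of a polynomial `P(X,Y,t)` at `(u, v, 1/S(x,y))` for `(u,v) = a`. -/
def evalPt (St : Finset (ℤ × ℤ)) (w : ℤ × ℤ → ℂ) (x y : K)
    (P : MvPolynomial (Fin 3) ℂ) (a : K × K) : K :=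
  MvPolynomial.aeval ![a.1, a.2, (stepEval St w x y)⁻¹] P

/-- Evaluation of a polynomial `P(X,Y,t)` at `(x, y, 1/S(x,y))`. -/
def evalXY (St : Finset (ℤ × ℤ)) (w : ℤ × ℤ → ℂ) (x y : K)
    (P : MvPolynomial (Fin 3) ℂ) : K :=
  evalPt St w x y P (x, y)

/-- Evaluation of the fraction `A/B` at `(a.1, a.2, 1/S(x,y))`. -/
def fracEval (St : Finset (ℤ × ℤ)) (w : ℤ × ℤ → ℂ) (x y : K)
    (A B : MvPolynomial (Fin 3) ℂ) (a : K × K) : K :=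
  evalPt St w x y A a / evalPt St w x y B a

/-- Evaluation (orbit sum) of the fraction `A/B` on a `0`-chain. -/
def chainEval (St : Finset (ℤ × ℤ)) (w : ℤ × ℤ → ℂ) (x y : K)
    (A B : MvPolynomial (Fin 3) ℂ) (γ : (K × K) →₀ ℂ) : K :=
  γ.sum fun a c => algebraMap ℂ K c * fracEval St w x y A B a

/-- A `0`-chain cancels decoupled fractions: the orbit sum of every regular fraction
of the form `F(X,t) + G(Y,t)` on it vanishes. -/
def CancelsDecoupled (St : Finset (ℤ × ℤ)) (w : ℤ × ℤ → ℂ) (mx my : ℕ)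
    (x y : K) (α : (K × K) →₀ ℂ) : Prop :=
  ∀ A₁ B₁ A₂ B₂ : MvPolynomial (Fin 3) ℂ,
    A₁ ∈ MvPolynomial.supported ℂ ({0, 2} : Set (Fin 3)) →
    B₁ ∈ MvPolynomial.supported ℂ ({0, 2} : Set (Fin 3)) →
    A₂ ∈ MvPolynomial.supported ℂ ({1, 2} : Set (Fin 3)) →
    B₂ ∈ MvPolynomial.supported ℂ ({1, 2} : Set (Fin 3)) →
    ¬ kernelPoly St w mx my ∣ B₁ → ¬ kernelPoly St w mx my ∣ B₂ →
    (α.sum fun a c =>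
      algebraMap ℂ K c * (fracEval St w x y A₁ B₁ a + fracEval St w x y A₂ B₂ a)) = 0

/-- The field of fractions `ℂ(X,Y,t)`. -/
abbrev FF : Type := FractionRing (MvPolynomial (Fin 3) ℂ)

/-- The inclusion of `ℂ[X,Y,t]` into `ℂ(X,Y,t)`. -/
def toFF (P : MvPolynomial (Fin 3) ℂ) : FF := algebraMap (MvPolynomial (Fin 3) ℂ) FF P

/-- The regular fraction `A/B` admits a Galois decoupling:
`A/B = F + G + K̃·R` with `F ∈ ℂ(X,t)`, `G ∈ ℂ(Y,t)` and `R` regular. -/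
def AdmitsDecoupling (St : Finset (ℤ × ℤ)) (w : ℤ × ℤ → ℂ) (mx my : ℕ)
    (A B : MvPolynomial (Fin 3) ℂ) : Prop :=
  ∃ F₁ F₂ G₁ G₂ R₁ R₂ : MvPolynomial (Fin 3) ℂ,
    F₁ ∈ MvPolynomial.supported ℂ ({0, 2} : Set (Fin 3)) ∧
    F₂ ∈ MvPolynomial.supported ℂ ({0, 2} : Set (Fin 3)) ∧
    G₁ ∈ MvPolynomial.supported ℂ ({1, 2} : Set (Fin 3)) ∧
    G₂ ∈ MvPolynomial.supported ℂ ({1, 2} : Set (Fin 3)) ∧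
    ¬ kernelPoly St w mx my ∣ F₂ ∧ ¬ kernelPoly St w mx my ∣ G₂ ∧
    ¬ kernelPoly St w mx my ∣ R₂ ∧
    toFF A / toFF B =
      toFF F₁ / toFF F₂ + toFF G₁ / toFF G₂ +
        toFF (kernelPoly St w mx my) * (toFF R₁ / toFF R₂)

/-- `(I, J) = (A/B, Cc/D)` is a pair of Galois invariants: `I - J = K̃·R` with `R` regular. -/
def IsInvariantPair (St : Finset (ℤ × ℤ)) (w : ℤ × ℤ → ℂ) (mx my : ℕ)
    (A B Cc D : MvPolynomial (Fin 3) ℂ) : Prop :=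
  ∃ R₁ R₂ : MvPolynomial (Fin 3) ℂ, ¬ kernelPoly St w mx my ∣ R₂ ∧
    toFF A / toFF B - toFF Cc / toFF D =
      toFF (kernelPoly St w mx my) * (toFF R₁ / toFF R₂)

/-- A constant pair of Galois invariants: both members are equivalent to a
common fraction `c ∈ ℂ(t)` modulo `K̃`. -/
def IsConstantPair (St : Finset (ℤ × ℤ)) (w : ℤ × ℤ → ℂ) (mx my : ℕ)
    (A B Cc D : MvPolynomial (Fin 3) ℂ) : Prop :=
  IsInvariantPair St w mx my A B Cc D ∧
  ∃ c₁ c₂ : MvPolynomial (Fin 3) ℂ,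
    c₁ ∈ MvPolynomial.supported ℂ ({2} : Set (Fin 3)) ∧
    c₂ ∈ MvPolynomial.supported ℂ ({2} : Set (Fin 3)) ∧ c₂ ≠ 0 ∧
    IsInvariantPair St w mx my A B c₁ c₂ ∧ IsInvariantPair St w mx my Cc D c₁ c₂

/-- `(γx, γy)` is a pseudo-decoupling of `(x,y)`. -/
def PseudoDecoupling (St : Finset (ℤ × ℤ)) (w : ℤ × ℤ → ℂ) (mx my : ℕ)
    (x y : K) (γx γy : (K × K) →₀ ℂ) : Prop :=
  ∀ A B : MvPolynomial (Fin 3) ℂ, ¬ kernelPoly St w mx my ∣ B →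
    AdmitsDecoupling St w mx my A B →
      fracEval St w x y A B (x, y) =
          chainEval St w x y A B γx + chainEval St w x y A B γy ∧
        chainEval St w x y A B γx ∈ kxF St w x y ∧
        chainEval St w x y A B γy ∈ kyF St w x y

/-- `(gx, gy, a)` is a decoupling of `(x,y)` in the orbit. -/
def IsDecoupling (St : Finset (ℤ × ℤ)) (w : ℤ × ℤ → ℂ) (mx my : ℕ)
    (x y : K) (gx gy a : (K × K) →₀ ℂ) : Prop :=
  Finsupp.single (x, y) (1 : ℂ) = gx + gy + a ∧
  (∀ σ ∈ Gx St w x y, actChain σ gx = gx) ∧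
  (∀ σ ∈ Gy St w x y, actChain σ gy = gy) ∧
  CancelsDecoupled St w mx my x y a

/-- The `x`-part of the boundary of a `1`-chain. -/
def boundaryX (St : Finset (ℤ × ℤ)) (w : ℤ × ℤ → ℂ)
    (c : ((K × K) × (K × K)) →₀ ℂ) : (K × K) →₀ ℂ :=
  c.sum fun e coeff =>
    if XAdj St w e.1 e.2 then
      coeff • (Finsupp.single e.2 (1 : ℂ) - Finsupp.single e.1 (1 : ℂ)) else 0

/-- The `y`-part of the boundary of a `1`-chain. -/
def boundaryY (St : Finset (ℤ × ℤ)) (w : ℤ × ℤ → ℂ)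
    (c : ((K × K) × (K × K)) →₀ ℂ) : (K × K) →₀ ℂ :=
  c.sum fun e coeff =>
    if YAdj St w e.1 e.2 then
      coeff • (Finsupp.single e.2 (1 : ℂ) - Finsupp.single e.1 (1 : ℂ)) else 0

/-- The `0`-chain induced by a bicolored loop. -/
def IsBicoloredChain (St : Finset (ℤ × ℤ)) (w : ℤ × ℤ → ℂ) (x y : K)
    (α : (K × K) →₀ ℂ) : Prop :=
  ∃ (n : ℕ) (b : ℕ → K × K), 0 < n ∧ b (2 * n) = b 0 ∧
    (∀ j < 2 * n, b j ∈ orbit St w x y) ∧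
    (∀ i < n, XAdj St w (b (2 * i)) (b (2 * i + 1)) ∧
      YAdj St w (b (2 * i + 1)) (b (2 * i + 2))) ∧
    α = ∑ j ∈ Finset.range (2 * n), ((-1 : ℂ) ^ (j + 1)) • Finsupp.single (b j) (1 : ℂ)

/-- The `0`-chain `ω = (1/|𝒪|) ∑_{a ∈ 𝒪} a`. -/
def omegaChain (St : Finset (ℤ × ℤ)) (w : ℤ × ℤ → ℂ) (x y : K)
    (h : (orbit St w x y).Finite) : (K × K) →₀ ℂ :=
  ((h.toFinset.card : ℂ))⁻¹ • ∑ a ∈ h.toFinset, Finsupp.single a (1 : ℂ)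

/-- The average `[G]·γ = (1/|G|) ∑_{σ ∈ G} σ·γ` of a `0`-chain under a group. -/
def groupAverage {M : IntermediateField ℂ K} (G : Subgroup (↥M ≃ₐ[ℂ] ↥M))
    (γ : (K × K) →₀ ℂ) : (K × K) →₀ ℂ :=
  ((Nat.card G : ℂ))⁻¹ • ∑ᶠ σ ∈ (G : Set (↥M ≃ₐ[ℂ] ↥M)), actChain σ γ

/-- `ℂ[X,t]` (two variables: `0` and `1`). -/
abbrev MvP2 : Type := MvPolynomial (Fin 2) ℂ

/-- `ℂ(X,t)`, the fraction field of `ℂ[X,t]`. -/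
abbrev CXt : Type := FractionRing MvP2

/-- Constants `ℂ → ℂ(X,t)`. -/
def cconst : ℂ →+* CXt := (algebraMap MvP2 CXt).comp (MvPolynomial.C)

/-- The first generator of `ℂ(X,t)`. -/
def gen0 : CXt := algebraMap MvP2 CXt (MvPolynomial.X 0)

/-- The second generator of `ℂ(X,t)`. -/
def gen1 : CXt := algebraMap MvP2 CXt (MvPolynomial.X 1)

/-- The kernel polynomial viewed as a polynomial in `Y` over `ℂ(X,t)`. -/
def kernelInY (St : Finset (ℤ × ℤ)) (w : ℤ × ℤ → ℂ) (mx my : ℕ) :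
    Polynomial CXt :=
  MvPolynomial.eval₂ ((Polynomial.C : CXt →+* Polynomial CXt).comp cconst)
    ![Polynomial.C gen0, Polynomial.X, Polynomial.C gen1]
    (kernelPoly St w mx my)

/-- The kernel polynomial viewed as a polynomial in `X` over `ℂ(Y,t)`. -/
def kernelInX (St : Finset (ℤ × ℤ)) (w : ℤ × ℤ → ℂ) (mx my : ℕ) :
    Polynomial CXt :=
  MvPolynomial.eval₂ ((Polynomial.C : CXt →+* Polynomial CXt).comp cconst)
    ![Polynomial.X, Polynomial.C gen0, Polynomial.C gen1]
    (kernelPoly St w mx my)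

/-- The kernel polynomial viewed as a polynomial in `X, Y` over `ℂ(t)`. -/
def kernelInXY (St : Finset (ℤ × ℤ)) (w : ℤ × ℤ → ℂ) (mx my : ℕ) :
    MvPolynomial (Fin 2) (RatFunc ℂ) :=
  MvPolynomial.eval₂
    ((MvPolynomial.C : RatFunc ℂ →+* MvPolynomial (Fin 2) (RatFunc ℂ)).comp
      (RatFunc.C : ℂ →+* RatFunc ℂ))
    ![MvPolynomial.X 0, MvPolynomial.X 1, MvPolynomial.C RatFunc.X]
    (kernelPoly St w mx my)

/-- The specialization `K̃(x, Y, 1/S(x,y))` as a polynomial in `Y` over `k(x)`. -/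
def kernelAtX (St : Finset (ℤ × ℤ)) (w : ℤ × ℤ → ℂ) (mx my : ℕ) (x y : K) :
    Polynomial ↥(kxF St w x y) :=
  MvPolynomial.aeval
    ![Polynomial.C (⟨x, x_mem_kxF St w x y⟩ : kxF St w x y), Polynomial.X,
      Polynomial.C (⟨(stepEval St w x y)⁻¹, inv_mem (S_mem_kxF St w x y)⟩ : kxF St w x y)]
    (kernelPoly St w mx my)

/-- The specialization `K̃(X, y, 1/S(x,y))` as a polynomial in `X` over `k(y)`. -/
def kernelAtY (St : Finset (ℤ × ℤ)) (w : ℤ × ℤ → ℂ) (mx my : ℕ) (x y : K) :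
    Polynomial ↥(kyF St w x y) :=
  MvPolynomial.aeval
    ![Polynomial.X, Polynomial.C (⟨y, y_mem_kyF St w x y⟩ : kyF St w x y),
      Polynomial.C (⟨(stepEval St w x y)⁻¹, inv_mem (S_mem_kyF St w x y)⟩ : kyF St w x y)]
    (kernelPoly St w mx my)

/-- Values of regular fractions with numerator and denominator supported on a set
of variables. -/
def regRange (St : Finset (ℤ × ℤ)) (w : ℤ × ℤ → ℂ) (x y : K) (mx my : ℕ)
    (s : Set (Fin 3)) : Set K :=
  {z | ∃ A B : MvPolynomial (Fin 3) ℂ,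
    A ∈ MvPolynomial.supported ℂ s ∧ B ∈ MvPolynomial.supported ℂ s ∧
    ¬ kernelPoly St w mx my ∣ B ∧ z = evalXY St w x y A / evalXY St w x y B}

end QuadrantWalk
namespace QuadrantWalk

lemma isAlgebraic_of_laurent_mem {K ι : Type*} [Field K] [Algebra ℂ K]
    (T : Finset ι) (c : ι → ℂ) (e f : ι → ℤ) (m n : ℕ)
    (hinj : ∀ p ∈ T, ∀ q ∈ T, e p = e q → f p = f q → p = q)
    (hc : ∀ p ∈ T, c p ≠ 0) (he : ∀ p ∈ T, -(m : ℤ) ≤ e p) (hf : ∀ p ∈ T, -(n : ℤ) ≤ f p)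
    (hne : ∃ p ∈ T, f p ≠ 0) {u v : K} (hu : Transcendental ℂ u) (hv : v ≠ 0)
    {E : IntermediateField ℂ K} (huE : u ∈ E)
    (hS : ∑ p ∈ T, algebraMap ℂ K (c p) * u ^ e p * v ^ f p ∈ E) :
    IsAlgebraic E v := by
  have hu0 : u ≠ 0 := fun h => hu (h ▸ isAlgebraic_zero)
  obtain ⟨p₀, hp₀, hfp₀⟩ := hne
  have hmem : ∀ p, algebraMap ℂ K (c p) * u ^ e p ∈ E := fun p =>
    mul_mem (E.algebraMap_mem _) (zpow_mem huE _)
  let q : Polynomial E :=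
    ∑ p ∈ T, Polynomial.C (⟨_, hmem p⟩ : E) * Polynomial.X ^ (f p + n).toNat -
      Polynomial.C (⟨_, hS⟩ : E) * Polynomial.X ^ n
  refine ⟨q, fun hq => ?_, ?_⟩
  · have hcoeff := congrArg (fun r => ((Polynomial.coeff r (f p₀ + n).toNat : E) : K)) hq
    have h₀ := hf p₀ hp₀
    have hn : (f p₀ + n).toNat ≠ n := by omega
    simp only [q, Polynomial.coeff_sub, Polynomial.finsetSum_coeff, Polynomial.coeff_C_mul,
      Polynomial.coeff_X_pow, hn, if_false, mul_zero, sub_zero, Polynomial.coeff_zero,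
      mul_ite, mul_one, ZeroMemClass.coe_zero, AddSubmonoidClass.coe_finsetSum] at hcoeff
    refine hu ⟨∑ p ∈ T, if (f p₀ + n).toNat = (f p + n).toNat then
      Polynomial.C (c p) * Polynomial.X ^ (e p + m).toNat else 0, fun hr => ?_, ?_⟩
    · have := congrArg (fun r => Polynomial.coeff r (e p₀ + m).toNat) hr
      simp only [Polynomial.finsetSum_coeff, Polynomial.coeff_zero] at this
      rw [Finset.sum_eq_single p₀] at this
      · simp [hc p₀ hp₀] at this
      · intro p hp hpp
        split_ifs with h
        · rw [Polynomial.coeff_C_mul, Polynomial.coeff_X_pow, if_neg, mul_zero]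
          intro h'
          have h1 := hf p hp
          have h2 := he p hp
          have h3 := he p₀ hp₀
          exact hpp (hinj p hp p₀ hp₀ (by omega) (by omega))
        · simp
      · exact fun h => absurd hp₀ h
    · have : (u ^ m) * (∑ p ∈ T, if (f p₀ + n).toNat = (f p + n).toNat then
          algebraMap ℂ K (c p) * u ^ e p else 0) = 0 := by
        rw [mul_eq_zero]
        right
        refine Eq.trans (Finset.sum_congr rfl fun p _ => ?_) hcoeff
        split_ifs <;> rfl
      rw [← this, map_sum, Finset.mul_sum]
      refine Finset.sum_congr rfl fun p hp => ?_
      split_ifs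
      · have h2 := he p hp
        rw [map_mul, map_pow, Polynomial.aeval_X, Polynomial.aeval_C, mul_left_comm,
          ← zpow_natCast, ← zpow_natCast, ← zpow_add₀ hu0]
        congr 2
        omega
      · simp
  · simp only [q, map_sub, map_sum, map_mul, map_pow, Polynomial.aeval_C, Polynomial.aeval_X,
      IntermediateField.algebraMap_apply]
    rw [Finset.sum_mul, sub_eq_zero]
    refine Finset.sum_congr rfl fun p hp => ?_
    have h2 := hf p hp
    rw [mul_assoc _ (v ^ f p), ← zpow_natCast, ← zpow_natCast, ← zpow_add₀ hv]
    congr 2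
    omega

section Orbit

variable {K : Type} [Field K] [Algebra ℂ K] {St : Finset (ℤ × ℤ)} {w : ℤ × ℤ → ℂ}
  {x y u v : K} {mx my : ℕ}

lemma isAlgebraic_snd_of_stepEval_mem (hw : ∀ p ∈ St, w p ≠ 0) (hb : ExponentBounds St mx my)
    (hn : NotUnivariate St) (huv : AlgebraicIndependent ℂ ![u, v]) {E : IntermediateField ℂ K}
    (hu : u ∈ E) (hS : stepEval St w u v ∈ E) : IsAlgebraic E v := by
  have htu : Transcendental ℂ u := huv.transcendental 0
  have htv : Transcendental ℂ v := huv.transcendental 1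
  refine isAlgebraic_of_laurent_mem St w Prod.fst Prod.snd mx my
    (fun p _ q _ => Prod.ext) hw hb.lowerX hb.lowerY ?_ htu
    (by rintro rfl; exact htv isAlgebraic_zero) hu hS
  obtain ⟨p, hp, q, hq, hpq⟩ := hn.2
  by_cases h : p.2 = 0
  · exact ⟨q, hq, fun h' => hpq (h.trans h'.symm)⟩
  · exact ⟨p, hp, h⟩

lemma isAlgebraic_fst_of_stepEval_mem (hw : ∀ p ∈ St, w p ≠ 0) (hb : ExponentBounds St mx my)
    (hn : NotUnivariate St) (huv : AlgebraicIndependent ℂ ![u, v]) {E : IntermediateField ℂ K}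
    (hv : v ∈ E) (hS : stepEval St w u v ∈ E) : IsAlgebraic E u := by
  have htu : Transcendental ℂ u := huv.transcendental 0
  have htv : Transcendental ℂ v := huv.transcendental 1
  refine isAlgebraic_of_laurent_mem St w Prod.snd Prod.fst my mx
    (fun p _ q _ h h' => Prod.ext h' h) hw hb.lowerY hb.lowerX ?_ htv
    (by rintro rfl; exact htu isAlgebraic_zero) hv ?_
  · obtain ⟨p, hp, q, hq, hpq⟩ := hn.1
    by_cases h : p.1 = 0
    · exact ⟨q, hq, fun h' => hpq (h.trans h'.symm)⟩
    · exact ⟨p, hp, h⟩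
  · simpa only [stepEval, mul_right_comm] using hS

lemma stepEval_mem {E : IntermediateField ℂ K} (hu : u ∈ E) (hv : v ∈ E) :
    stepEval St w u v ∈ E :=
  sum_mem fun _ _ => mul_mem (mul_mem (E.algebraMap_mem _) (zpow_mem hu _)) (zpow_mem hv _)

lemma isAlgebraic_of_adjoin {s : Set K} [Algebra.IsAlgebraic (adjoin ℂ s) K]
    {E : IntermediateField ℂ K} (hs : ∀ z ∈ s, IsAlgebraic E z) : Algebra.IsAlgebraic E K := by
  have hle : adjoin ℂ s ≤ (algebraicClosure E K).restrictScalars ℂ :=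
    adjoin_le_iff.2 fun z hz => mem_algebraicClosure_iff.2 (hs z hz)
  have : Algebra.IsAlgebraic (algebraicClosure E K) K := ⟨fun z => by
    obtain ⟨p, hp, hz⟩ := Algebra.IsAlgebraic.isAlgebraic (R := adjoin ℂ s) z
    let φ : adjoin ℂ s →+* algebraicClosure E K := (inclusion hle).toRingHom
    refine ⟨p.map φ, ?_, ?_⟩
    · exact (Polynomial.map_ne_zero_iff (inclusion hle).injective).2 hp
    · rw [← hz, Polynomial.aeval_def, Polynomial.eval₂_map, Polynomial.aeval_def]
      rfl⟩
  exact Algebra.IsAlgebraic.trans E (algebraicClosure E K) K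

lemma isAlgebraic_kxF (hset : Setting St w x y) (hb : ExponentBounds St mx my) :
    Algebra.IsAlgebraic (kxF St w x y) K := by
  have := hset.algebraic
  unfold kxyF at this
  refine isAlgebraic_of_adjoin (s := {x, y}) fun z hz => ?_
  rcases hz with rfl | rfl
  · exact isAlgebraic_algebraMap (⟨_, x_mem_kxF St w _ y⟩ : kxF St w _ y)
  · exact isAlgebraic_snd_of_stepEval_mem hset.weight_ne hb hset.notUniv hset.indep
      (x_mem_kxF St w x _) (S_mem_kxF St w x _)

lemma isAlgebraic_kyF (hset : Setting St w x y) (hb : ExponentBounds St mx my) :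
    Algebra.IsAlgebraic (kyF St w x y) K := by
  have := hset.algebraic
  unfold kxyF at this
  refine isAlgebraic_of_adjoin (s := {x, y}) fun z hz => ?_
  rcases hz with rfl | rfl
  · exact isAlgebraic_fst_of_stepEval_mem hset.weight_ne hb hset.notUniv hset.indep
      (y_mem_kyF St w _ y) (S_mem_kyF St w _ y)
  · exact isAlgebraic_algebraMap (⟨_, y_mem_kyF St w x _⟩ : kyF St w x _)

lemma algebraicIndependent_of_isAlgebraic {u' v' : K} (huv : AlgebraicIndependent ℂ ![u, v])
    [Algebra.IsAlgebraic (adjoin ℂ {u', v'}) K] : AlgebraicIndependent ℂ ![u', v'] := by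
  have hr : Set.range ![u', v'] = {u', v'} := by simp [Set.pair_comm]
  have : Algebra.IsAlgebraic (Algebra.adjoin ℂ (Set.range ![u', v'])) K := by
    rw [hr]
    exact isAlgebraic_adjoin_iff_top.1 inferInstance
  exact (Algebra.IsAlgebraic.isTranscendenceBasis_of_le_trdeg_of_finite ℂ ![u', v']
    huv.cardinalMk_le_trdeg).1

lemma orbit_spec (hset : Setting St w x y) (hb : ExponentBounds St mx my) {a : K × K}
    (ha : a ∈ orbit St w x y) :
    AlgebraicIndependent ℂ ![a.1, a.2] ∧ Algebra.IsAlgebraic (adjoin ℂ {a.1, a.2}) K ∧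
      stepEval St w a.1 a.2 = stepEval St w x y := by
  induction ha with
  | refl => exact ⟨hset.indep, hset.algebraic, rfl⟩
  | @tail b c _ hbc ih =>
    obtain ⟨hi, halg, hS⟩ := ih
    have h1 : c.1 ∈ adjoin ℂ {c.1, c.2} := subset_adjoin ℂ _ (by simp)
    have h2 : c.2 ∈ adjoin ℂ {c.1, c.2} := subset_adjoin ℂ _ (by simp)
    have hSc := stepEval_mem (St := St) (w := w) h1 h2
    have halg' : Algebra.IsAlgebraic (adjoin ℂ {c.1, c.2}) K := by
      refine isAlgebraic_of_adjoin (s := {b.1, b.2}) fun z hz => ?_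
      rcases hbc with ⟨h, h'⟩ | ⟨h, h'⟩
      · rw [← h'] at hSc
        rcases hz with rfl | rfl
        · rw [h]
          exact isAlgebraic_algebraMap (⟨_, h1⟩ : adjoin ℂ {c.1, c.2})
        · exact isAlgebraic_snd_of_stepEval_mem hset.weight_ne hb hset.notUniv hi (h ▸ h1) hSc
      · rw [← h'] at hSc
        rcases hz with rfl | rfl
        · exact isAlgebraic_fst_of_stepEval_mem hset.weight_ne hb hset.notUniv hi (h ▸ h2) hSc
        · rw [h]
          exact isAlgebraic_algebraMap (⟨_, h2⟩ : adjoin ℂ {c.1, c.2})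
    refine ⟨algebraicIndependent_of_isAlgebraic hi, halg', ?_⟩
    rw [← hS]
    rcases hbc with h | h <;> exact h.2.symm

/-- The numerator `X^mx * Y^my * S(X,Y)` of the step polynomial. -/
def stepNumer (St : Finset (ℤ × ℤ)) (w : ℤ × ℤ → ℂ) (mx my : ℕ) : MvPolynomial (Fin 3) ℂ :=
  ∑ p ∈ St, MvPolynomial.C (w p) * MvPolynomial.X 0 ^ (p.1 + (mx : ℤ)).toNat *
    MvPolynomial.X 1 ^ (p.2 + (my : ℤ)).toNat

lemma coeff_stepNumer (hb : ExponentBounds St mx my) {p : ℤ × ℤ} (hp : p ∈ St) :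
    MvPolynomial.coeff (Finsupp.single 0 (p.1 + (mx : ℤ)).toNat +
      Finsupp.single 1 (p.2 + (my : ℤ)).toNat) (stepNumer St w mx my) = w p := by
  have hmon : ∀ q : ℤ × ℤ, (MvPolynomial.C (w q) * MvPolynomial.X 0 ^ (q.1 + (mx : ℤ)).toNat *
      MvPolynomial.X 1 ^ (q.2 + (my : ℤ)).toNat : MvPolynomial (Fin 3) ℂ) =
      MvPolynomial.monomial (Finsupp.single 0 (q.1 + (mx : ℤ)).toNat +
        Finsupp.single 1 (q.2 + (my : ℤ)).toNat) (w q) := by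
    intro q
    rw [MvPolynomial.X_pow_eq_monomial, MvPolynomial.X_pow_eq_monomial,
      MvPolynomial.C_mul_monomial, MvPolynomial.monomial_mul, mul_one, mul_one]
  simp only [stepNumer, hmon, MvPolynomial.coeff_sum, MvPolynomial.coeff_monomial]
  rw [Finset.sum_eq_single p, if_pos rfl]
  · intro q hq hqp
    refine if_neg fun h => hqp ?_
    have h0 := DFunLike.congr_fun h 0
    have h1 := DFunLike.congr_fun h 1
    simp at h0 h1
    have := hb.lowerX p hp
    have := hb.lowerX q hq
    have := hb.lowerY p hp
    have := hb.lowerY q hq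
    exact Prod.ext (by omega) (by omega)
  · exact fun h => absurd hp h

lemma not_X_dvd_stepNumer (hw : ∀ p ∈ St, w p ≠ 0) (hb : ExponentBounds St mx my) :
    ¬ MvPolynomial.X 0 ∣ stepNumer St w mx my ∧ ¬ MvPolynomial.X 1 ∣ stepNumer St w mx my := by
  constructor
  · rintro ⟨q, hq⟩
    obtain ⟨p, hp, hpx⟩ := hb.attainX
    have h := coeff_stepNumer (w := w) hb hp
    rw [hq, MvPolynomial.coeff_X_mul', if_neg] at h
    · exact hw p hp h.symm
    · simp [hpx]
  · rintro ⟨q, hq⟩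
    obtain ⟨p, hp, hpy⟩ := hb.attainY
    have h := coeff_stepNumer (w := w) hb hp
    rw [hq, MvPolynomial.coeff_X_mul', if_neg] at h
    · exact hw p hp h.symm
    · simp [hpy]

lemma isRelPrime_kernelPoly_stepNumer (hw : ∀ p ∈ St, w p ≠ 0) (hb : ExponentBounds St mx my) :
    IsRelPrime (kernelPoly St w mx my) (stepNumer St w mx my) := by
  obtain ⟨h0, h1⟩ := not_X_dvd_stepNumer hw hb
  refine WfDvdMonoid.isRelPrime_of_no_irreducible_factors
    (fun h => h0 (h.2 ▸ dvd_zero _)) fun p hp hpK hpS => ?_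
  have hprime := hp.prime
  have hdvd : p ∣ MvPolynomial.X 0 ^ mx * MvPolynomial.X 1 ^ my := by
    have := dvd_add hpK (hpS.mul_left (MvPolynomial.X 2))
    simpa only [kernelPoly, stepNumer, sub_add_cancel] using this
  have hX : ∀ i : Fin 3, p ∣ MvPolynomial.X i → MvPolynomial.X i ∣ stepNumer St w mx my :=
    fun i hi => ((hp.associated_of_dvd (MvPolynomial.X_prime (i := i)).irreducible hi).symm.dvd).trans
      hpS
  rcases hprime.dvd_or_dvd hdvd with h | h
  · exact h0 (hX 0 (hprime.dvd_of_dvd_pow h))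
  · exact h1 (hX 1 (hprime.dvd_of_dvd_pow h))

lemma exists_kernelPoly_dvd_sub (P : MvPolynomial (Fin 3) ℂ) :
    ∃ (d : ℕ) (Q : MvPolynomial (Fin 2) ℂ), kernelPoly St w mx my ∣
      stepNumer St w mx my ^ d * P - MvPolynomial.rename Fin.castSucc Q := by
  induction P using MvPolynomial.induction_on with
  | C a => exact ⟨0, MvPolynomial.C a, by simp⟩
  | add P₁ P₂ h₁ h₂ =>
    obtain ⟨d₁, Q₁, c₁, h₁⟩ := h₁
    obtain ⟨d₂, Q₂, c₂, h₂⟩ := h₂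
    obtain ⟨N, hN⟩ : ∃ N : MvPolynomial (Fin 2) ℂ,
        MvPolynomial.rename Fin.castSucc N = stepNumer St w mx my :=
      ⟨∑ p ∈ St, MvPolynomial.C (w p) * MvPolynomial.X 0 ^ (p.1 + (mx : ℤ)).toNat *
        MvPolynomial.X 1 ^ (p.2 + (my : ℤ)).toNat, by simp [stepNumer]⟩
    refine ⟨d₁ + d₂, N ^ d₂ * Q₁ + N ^ d₁ * Q₂, stepNumer St w mx my ^ d₂ * c₁ +
      stepNumer St w mx my ^ d₁ * c₂, ?_⟩
    rw [map_add, map_mul, map_mul, map_pow, map_pow, hN]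
    linear_combination stepNumer St w mx my ^ d₂ * h₁ + stepNumer St w mx my ^ d₁ * h₂
  | mul_X P i h =>
    obtain ⟨d, Q, c, h⟩ := h
    induction i using Fin.lastCases with
    | cast j =>
      refine ⟨d, Q * MvPolynomial.X j, c * MvPolynomial.X j.castSucc, ?_⟩
      rw [map_mul, MvPolynomial.rename_X]
      linear_combination MvPolynomial.X j.castSucc * h
    | last =>
      refine ⟨d + 1, Q * (MvPolynomial.X 0 ^ mx * MvPolynomial.X 1 ^ my),
        MvPolynomial.X 0 ^ mx * MvPolynomial.X 1 ^ my * c - stepNumer St w mx my ^ d * P, ?_⟩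
      have hK : kernelPoly St w mx my = MvPolynomial.X 0 ^ mx * MvPolynomial.X 1 ^ my -
        MvPolynomial.X 2 * stepNumer St w mx my := rfl
      simp only [map_mul, map_pow, MvPolynomial.rename_X]
      have h2 : Fin.last 2 = 2 := rfl
      have e0 : (Fin.castSucc 0 : Fin 3) = 0 := rfl
      have e1 : (Fin.castSucc 1 : Fin 3) = 1 := rfl
      rw [h2, e0, e1]
      linear_combination (MvPolynomial.X 0 ^ mx * MvPolynomial.X 1 ^ my) * h +
        stepNumer St w mx my ^ d * P * hK

lemma evalPt_kernelPoly (hb : ExponentBounds St mx my) {a : K × K} (h0 : a.1 ≠ 0) (h1 : a.2 ≠ 0)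
    (hS : stepEval St w a.1 a.2 = stepEval St w x y) (hS0 : stepEval St w x y ≠ 0) :
    evalPt St w x y (kernelPoly St w mx my) a = 0 := by
  have hN : a.1 ^ mx * a.2 ^ my * stepEval St w a.1 a.2 = ∑ p ∈ St, algebraMap ℂ K (w p) *
      a.1 ^ (p.1 + (mx : ℤ)).toNat * a.2 ^ (p.2 + (my : ℤ)).toNat := by
    rw [stepEval, Finset.mul_sum]
    refine Finset.sum_congr rfl fun p hp => ?_
    have hx := hb.lowerX p hp
    have hy := hb.lowerY p hp
    rw [← zpow_natCast a.1 (Int.toNat _), ← zpow_natCast a.2 (Int.toNat _),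
      Int.toNat_of_nonneg (by omega), Int.toNat_of_nonneg (by omega), zpow_add₀ h0, zpow_add₀ h1,
      zpow_natCast, zpow_natCast]
    ring
  simp only [evalPt, kernelPoly, map_sub, map_mul, map_pow, map_sum, MvPolynomial.aeval_X,
    MvPolynomial.aeval_C, Matrix.cons_val_zero, Matrix.cons_val_one, Matrix.cons_val]
  rw [← hN, hS]
  field_simp
  ring

lemma orbit_ne_zero (hset : Setting St w x y) (hb : ExponentBounds St mx my) {a : K × K}
    (ha : a ∈ orbit St w x y) : a.1 ≠ 0 ∧ a.2 ≠ 0 := by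
  have hi := (orbit_spec hset hb ha).1
  have h0 : Transcendental ℂ a.1 := hi.transcendental 0
  have h1 : Transcendental ℂ a.2 := hi.transcendental 1
  exact ⟨fun h => h0 (h ▸ isAlgebraic_zero), fun h => h1 (h ▸ isAlgebraic_zero)⟩

lemma stepEval_ne_zero (hset : Setting St w x y) (hb : ExponentBounds St mx my) :
    stepEval St w x y ≠ 0 := by
  intro h
  have hy : IsAlgebraic (adjoin ℂ {x}) y :=
    isAlgebraic_snd_of_stepEval_mem hset.weight_ne hb hset.notUniv hset.indep
      (mem_adjoin_simple_self ℂ x) (h ▸ zero_mem _)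
  have ht := hset.indep.transcendental_adjoin (s := {0}) (i := 1) (by simp)
  rw [Set.image_singleton] at ht
  exact ht (isAlgebraic_adjoin_iff.1 hy)

lemma kernelPoly_dvd_of_evalPt_eq_zero (hset : Setting St w x y) (hb : ExponentBounds St mx my)
    {a : K × K} (ha : a ∈ orbit St w x y) {P : MvPolynomial (Fin 3) ℂ}
    (hP : evalPt St w x y P a = 0) : kernelPoly St w mx my ∣ P := by
  obtain ⟨hi, -, hS⟩ := orbit_spec hset hb ha
  obtain ⟨h0, h1⟩ := orbit_ne_zero hset hb ha
  obtain ⟨d, Q, hQ⟩ := exists_kernelPoly_dvd_sub (St := St) (w := w) (mx := mx) (my := my) P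
  have hQ0 : Q = 0 := by
    refine hi.eq_zero_of_aeval_eq_zero Q ?_
    obtain ⟨c, hc⟩ := hQ
    have := congrArg (fun R => evalPt St w x y R a) hc
    have hK := evalPt_kernelPoly hb h0 h1 hS (stepEval_ne_zero hset hb)
    simp only [evalPt, map_sub, map_mul, MvPolynomial.aeval_rename] at this hK hP
    rw [hK, hP, mul_zero, zero_mul, zero_sub, neg_eq_zero] at this
    rw [← this]
    congr 2
    funext i
    fin_cases i <;> rfl
  rw [hQ0, map_zero, sub_zero] at hQ
  exact ((isRelPrime_kernelPoly_stepNumer hset.weight_ne hb).pow_right).dvd_of_dvd_mul_left hQ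

lemma fracEval_eq_of_decoupling (hset : Setting St w x y) (hb : ExponentBounds St mx my)
    {a : K × K} (ha : a ∈ orbit St w x y)
    {A B F₁ F₂ G₁ G₂ R₁ R₂ : MvPolynomial (Fin 3) ℂ} (hB : ¬ kernelPoly St w mx my ∣ B)
    (hF : ¬ kernelPoly St w mx my ∣ F₂) (hG : ¬ kernelPoly St w mx my ∣ G₂)
    (hR : ¬ kernelPoly St w mx my ∣ R₂)
    (h : toFF A / toFF B = toFF F₁ / toFF F₂ + toFF G₁ / toFF G₂ +
      toFF (kernelPoly St w mx my) * (toFF R₁ / toFF R₂)) :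
    fracEval St w x y A B a = fracEval St w x y F₁ F₂ a + fracEval St w x y G₁ G₂ a := by
  have hFF : ∀ P, ¬ kernelPoly St w mx my ∣ P → toFF P ≠ 0 := fun P hP h0 =>
    hP ((map_eq_zero_iff _ (IsFractionRing.injective (MvPolynomial (Fin 3) ℂ) FF)).1 h0 ▸
      dvd_zero _)
  have hev : ∀ P, ¬ kernelPoly St w mx my ∣ P → evalPt St w x y P a ≠ 0 := fun P hP h0 =>
    hP (kernelPoly_dvd_of_evalPt_eq_zero hset hb ha h0)
  have hpoly : A * (F₂ * G₂ * R₂) = B * (F₁ * G₂ * R₂ + G₁ * F₂ * R₂ +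
      kernelPoly St w mx my * R₁ * F₂ * G₂) := by
    apply IsFractionRing.injective (MvPolynomial (Fin 3) ℂ) FF
    have hB' := hFF B hB
    have hF' := hFF F₂ hF
    have hG' := hFF G₂ hG
    have hR' := hFF R₂ hR
    field_simp at h
    simp only [map_mul, map_add]
    simp only [toFF] at h
    linear_combination h
  have hK : evalPt St w x y (kernelPoly St w mx my) a = 0 := by
    obtain ⟨h0, h1⟩ := orbit_ne_zero hset hb ha
    exact evalPt_kernelPoly hb h0 h1 (orbit_spec hset hb ha).2.2 (stepEval_ne_zero hset hb)
  have hval := congrArg (fun P => evalPt St w x y P a) hpoly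
  have hB' := hev B hB
  have hF' := hev F₂ hF
  have hG' := hev G₂ hG
  have hR' := hev R₂ hR
  simp only [fracEval, evalPt, map_mul, map_add] at *
  rw [hK] at hval
  rw [div_add_div _ _ hF' hG', div_eq_div_iff hB' (mul_ne_zero hF' hG')]
  apply mul_right_cancel₀ hR'
  linear_combination hval

lemma map_stepEval (τ : K ≃ₐ[ℂ] K) (u v : K) :
    τ (stepEval St w u v) = stepEval St w (τ u) (τ v) := by
  simp only [stepEval, map_sum, map_mul, map_zpow₀, AlgEquiv.commutes]

lemma map_mem_orbit (τ : K ≃ₐ[ℂ] K) (hτ : (τ x, τ y) ∈ orbit St w x y) {a : K × K}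
    (ha : a ∈ orbit St w x y) : (τ a.1, τ a.2) ∈ orbit St w x y := by
  induction ha with
  | refl => exact hτ
  | tail _ hbc ih =>
    refine ih.tail ?_
    rcases hbc with ⟨h, h'⟩ | ⟨h, h'⟩
    · exact Or.inl ⟨congrArg τ h, by simpa only [map_stepEval] using congrArg τ h'⟩
    · exact Or.inr ⟨congrArg τ h, by simpa only [map_stepEval] using congrArg τ h'⟩

lemma map_orbitF_le (τ : K ≃ₐ[ℂ] K) (hS : τ (stepEval St w x y) = stepEval St w x y)
    (hτ : (τ x, τ y) ∈ orbit St w x y) :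
    (orbitF St w x y).map τ.toAlgHom ≤ orbitF St w x y := by
  rw [orbitF, IntermediateField.adjoin_map, adjoin_le_iff]
  rintro _ ⟨z, hz | ⟨a, ha, hz⟩, rfl⟩
  · rw [Set.mem_singleton_iff.1 hz]
    change τ _ ∈ _
    rw [hS]
    exact S_mem_orbitF St w x y
  · refine subset_adjoin ℂ _ (Or.inr ⟨_, map_mem_orbit τ hτ ha, ?_⟩)
    exact hz.imp (congrArg τ) (congrArg τ)

lemma exists_restrict_orbitF (τ : K ≃ₐ[ℂ] K) (hS : τ (stepEval St w x y) = stepEval St w x y)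
    (hτ : (τ x, τ y) ∈ orbit St w x y) (hτ' : (τ.symm x, τ.symm y) ∈ orbit St w x y) :
    ∃ σ : orbitF St w x y ≃ₐ[ℂ] orbitF St w x y,
      ∀ (z : K) (hz : z ∈ orbitF St w x y), (σ ⟨z, hz⟩ : K) = τ z := by
  have hS' : τ.symm (stepEval St w x y) = stepEval St w x y := by
    rw [AlgEquiv.symm_apply_eq, hS]
  have heq : (orbitF St w x y).map τ.toAlgHom = orbitF St w x y := by
    refine le_antisymm (map_orbitF_le τ hS hτ) fun z hz => ?_
    exact ⟨τ.symm z, map_orbitF_le τ.symm hS' hτ' ⟨z, hz, rfl⟩, τ.apply_symm_apply z⟩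
  exact ⟨(intermediateFieldMap τ _).trans (equivOfEq heq), fun z hz => rfl⟩

lemma map_fracEval (τ : K ≃ₐ[ℂ] K) (hS : τ (stepEval St w x y) = stepEval St w x y)
    (A B : MvPolynomial (Fin 3) ℂ) (a : K × K) :
    τ (fracEval St w x y A B a) = fracEval St w x y A B (τ a.1, τ a.2) := by
  have h : ∀ P, τ (evalPt St w x y P a) = evalPt St w x y P (τ a.1, τ a.2) := by
    intro P
    rw [evalPt, evalPt, ← AlgEquiv.coe_toAlgHom, ← AlgHom.comp_apply, MvPolynomial.comp_aeval]
    congr 2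
    funext i
    fin_cases i <;> simp [hS]
  rw [fracEval, map_div₀, h, h, fracEval]

lemma chainEval_mem (hset : Setting St w x y) (hb : ExponentBounds St mx my)
    {E : IntermediateField ℂ K} [Algebra.IsAlgebraic E K] (hSE : stepEval St w x y ∈ E)
    (hE : ∀ τ : K ≃ₐ[E] K, (τ x, τ y) ∈ orbit St w x y)
    {g : (K × K) →₀ ℂ} (hg : ↑g.support ⊆ orbit St w x y)
    (h : ∀ σ ∈ fixingAuts E (orbitF St w x y),
      CancelsDecoupled St w mx my x y (actChain σ g - g))
    {A B : MvPolynomial (Fin 3) ℂ} (hB : ¬ kernelPoly St w mx my ∣ B)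
    (hAB : AdmitsDecoupling St w mx my A B) : chainEval St w x y A B g ∈ E := by
  have := hset.algClosed
  have : IsAlgClosure E K := ⟨inferInstance, inferInstance⟩
  have : Normal E K := IsAlgClosure.normal E K
  have : IsGalois E K := .mk
  suffices hbot : chainEval St w x y A B g ∈ (⊥ : IntermediateField E K) by
    obtain ⟨z, hz⟩ := mem_bot.1 hbot
    exact hz ▸ z.2
  rw [InfiniteGalois.mem_bot_iff_fixed]
  intro τ
  obtain ⟨F₁, F₂, G₁, G₂, R₁, R₂, hF₁, hF₂, hG₁, hG₂, hF, hG, hR, heq⟩ := hAB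
  have hfrac : ∀ a ∈ orbit St w x y, fracEval St w x y A B a =
      fracEval St w x y F₁ F₂ a + fracEval St w x y G₁ G₂ a :=
    fun a ha => fracEval_eq_of_decoupling hset hb ha hB hF hG hR heq
  have hτS : τ.restrictScalars ℂ (stepEval St w x y) = stepEval St w x y :=
    τ.commutes ⟨_, hSE⟩
  obtain ⟨σ, hσ⟩ := exists_restrict_orbitF (τ.restrictScalars ℂ) hτS (hE τ) (hE τ.symm)
  have hσ' : σ ∈ fixingAuts E (orbitF St w x y) := fun z hzE hzM =>
    Subtype.ext ((hσ z hzM).trans (τ.commutes ⟨z, hzE⟩))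
  have hact : ∀ a ∈ orbit St w x y,
      Prod.map (extendAut σ) (extendAut σ) a = (τ a.1, τ a.2) := by
    intro a ha
    have h1 : a.1 ∈ orbitF St w x y := subset_adjoin ℂ _ (Or.inr ⟨a, ha, Or.inl rfl⟩)
    have h2 : a.2 ∈ orbitF St w x y := subset_adjoin ℂ _ (Or.inr ⟨a, ha, Or.inr rfl⟩)
    refine Prod.ext ?_ ?_
    · exact (dif_pos h1).trans (hσ _ h1)
    · exact (dif_pos h2).trans (hσ _ h2)
  have hcancel := h σ hσ' F₁ F₂ G₁ G₂ hF₁ hF₂ hG₁ hG₂ hF hG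
  rw [Finsupp.sum_sub_index (by intros; rw [map_sub, sub_mul]), actChain,
    Finsupp.sum_mapDomain_index (by intros; rw [map_zero, zero_mul])
      (by intros; rw [map_add, add_mul]), sub_eq_zero] at hcancel
  calc τ (chainEval St w x y A B g)
      = g.sum fun a c => algebraMap ℂ K c *
          (fracEval St w x y F₁ F₂ (Prod.map (extendAut σ) (extendAut σ) a) +
            fracEval St w x y G₁ G₂ (Prod.map (extendAut σ) (extendAut σ) a)) := by
        rw [chainEval, Finsupp.sum, map_sum, Finsupp.sum]
        refine Finset.sum_congr rfl fun a ha => ?_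
        rw [hact a (hg ha), hfrac a (hg ha)]
        change τ.restrictScalars ℂ _ = _
        rw [map_mul, AlgEquiv.commutes, map_add, map_fracEval _ hτS, map_fracEval _ hτS]
        rfl
    _ = _ := hcancel
    _ = chainEval St w x y A B g :=
        Finset.sum_congr rfl fun a ha => by simp only [hfrac a (hg ha)]

end Orbit

/-- if `(x,y) = γx + γy` and `σ·γx - γx` (resp. `σ·γy - γy`) cancels
decoupled fractions for every `σ ∈ G_x` (resp. `σ ∈ G_y`), then `(γx, γy)` is a
pseudo-decoupling of `(x,y)`. -/
theorem stmt18 {K : Type} [Field K] [Algebra ℂ K]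
    (St : Finset (ℤ × ℤ)) (w : ℤ × ℤ → ℂ) (x y : K) (mx my : ℕ)
    (hset : Setting St w x y) (hb : ExponentBounds St mx my)
    (gx gy : (K × K) →₀ ℂ)
    (hgx : ↑gx.support ⊆ orbit St w x y) (hgy : ↑gy.support ⊆ orbit St w x y)
    (h1 : Finsupp.single (x, y) (1 : ℂ) = gx + gy)
    (h2 : ∀ σ ∈ Gx St w x y,
      CancelsDecoupled St w mx my x y (actChain σ gx - gx))
    (h3 : ∀ σ ∈ Gy St w x y,
      CancelsDecoupled St w mx my x y (actChain σ gy - gy)) :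
    PseudoDecoupling St w mx my x y gx gy := by
  intro A B hB hAB
  refine ⟨?_, ?_, ?_⟩
  · rw [chainEval, chainEval, ← Finsupp.sum_add_index', ← h1, Finsupp.sum_single_index]
    · rw [map_one, one_mul]
    · rw [map_zero, zero_mul]
    · intro a
      rw [map_zero, zero_mul]
    · intro a c d
      rw [map_add, add_mul]
  · have := isAlgebraic_kxF hset hb
    refine chainEval_mem hset hb (S_mem_kxF St w x y) (fun τ => ?_) hgx h2 hB hAB
    have hx : τ x = x := τ.commutes ⟨x, x_mem_kxF St w x y⟩
    have hS : τ (stepEval St w x y) = stepEval St w x y := τ.commutes ⟨_, S_mem_kxF St w x y⟩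
    have hS' := map_stepEval (St := St) (w := w) (τ.restrictScalars ℂ) x y
    exact Relation.ReflTransGen.single (Or.inl ⟨hx.symm, hS.symm.trans hS'⟩)
  · have := isAlgebraic_kyF hset hb
    refine chainEval_mem hset hb (S_mem_kyF St w x y) (fun τ => ?_) hgy h3 hB hAB
    have hy : τ y = y := τ.commutes ⟨y, y_mem_kyF St w x y⟩
    have hS : τ (stepEval St w x y) = stepEval St w x y := τ.commutes ⟨_, S_mem_kyF St w x y⟩
    have hS' := map_stepEval (St := St) (w := w) (τ.restrictScalars ℂ) x y
    exact Relation.ReflTransGen.single (Or.inr ⟨hy.symm, hS.symm.trans hS'⟩)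

end QuadrantWalk
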